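/- arXiv:1902.06817 — 2 statements merged into one kernel-verified Lean document; each statement's English description precedes it below -/
import Mathlib

section
/- Fix a sequence of integers (a_k)_{k≥1}, an index i ≥ 1, and an even integer r with r > i. Define integers (x_n)_{n≥i} by x_i = 0 if i is even and x_i = 1 if i is odd, and for n ≥ i, x_{n+1} = a_{n+1}·x_n if n is odd and x_{n+1} = a_{n+1}·x_n − a_{n+1} + 1 if n is even. Then x_r = Σ_{k=1}^{r−i} γ_{r,i+k}·(−1)^k if i is even, and x_r = Σ_{k=1}^{r−i} γ_{r,i+k}·(−1)^{k+1} if i is odd. -/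
/-- `gam a n l` is the product `a n * a (n-1) * ⋯ * a l`, i.e. γ_{n,l}. -/
def gam (a : ℕ → ℤ) (n l : ℕ) : ℤ := ∏ k ∈ Finset.Icc l n, a k

/-! Let `c n`, called `leafValue` below, be `0` for `n` even and `1` for `n` odd. Both branches of
the recurrence read `x (n + 1) = a (n + 1) * (x n - c (n + 1)) + c (n + 1)`, and
`c n - c (n + 1) = (-1) ^ (n + 1)`. Hence the deviation `y = x - c` satisfies
`y (n + 1) = a (n + 1) * (y n + (-1) ^ (n + 1))`, which unrolls to an alternating sum of products
of the `a k`; moreover `y i = 0`, and `y r = x r` for `r` even. -/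

open Finset

theorem sum_Ioc_eq_sum_Icc_one_sub {M : Type*} [AddCommMonoid M] (f : ℕ → M) (i r : ℕ) :
    ∑ k ∈ Ioc i r, f k = ∑ k ∈ Icc 1 (r - i), f (i + k) :=
  sum_nbij' (· - i) (i + ·) (by grind) (by grind) (by grind) (by grind) (by grind)

theorem eq_prod_mul_add_sum_of_affine_recurrence {R : Type*} [CommSemiring R] {a b y : ℕ → R}
    {i r : ℕ} (hy : ∀ n, i ≤ n → y (n + 1) = a (n + 1) * (y n + b (n + 1))) (hir : i ≤ r) :
    y r = (∏ j ∈ Ioc i r, a j) * y i + ∑ k ∈ Ioc i r, (∏ j ∈ Icc k r, a j) * b k := by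
  induction r, hir using Nat.le_induction with
  | base => simp
  | succ n hin ih =>
    have sum_succ : ∑ k ∈ Ioc i n, (∏ j ∈ Icc k (n + 1), a j) * b k =
        a (n + 1) * ∑ k ∈ Ioc i n, (∏ j ∈ Icc k n, a j) * b k := by
      rw [mul_sum]
      refine sum_congr rfl fun k hk ↦ ?_
      rw [prod_Icc_succ_top ((mem_Ioc.mp hk).2.trans n.le_succ)]
      ring
    rw [hy n hin, ih, prod_Ioc_succ_top hin, sum_Ioc_succ_top hin, sum_succ, Icc_self,
      prod_singleton]
    ring

/-- The value, in `R`, that the `Diagonalize` algorithm is to produce at the leaves of level `n`.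
It is defined at every level because the inputs `x n` are measured by their deviation from it. -/
def leafValue (R : Type*) [Zero R] [One R] (n : ℕ) : R := if Even n then 0 else 1

theorem leafValue_sub_leafValue_succ (R : Type*) [Ring R] (n : ℕ) :
    leafValue R n - leafValue R (n + 1) = (-1) ^ (n + 1) := by
  rcases n.even_or_odd with hn | hn
  · simp [leafValue, hn, hn.neg_one_pow, Nat.even_add_one, pow_succ]
  · simp [leafValue, hn.add_one, Nat.not_even_iff_odd.mpr hn]

theorem input_value_r_even_general {R : Type*} [CommRing R] (a : ℕ → R) {i r : ℕ} (hir : i ≤ r)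
    (x : ℕ → R)
    (hrec : ∀ n : ℕ, i ≤ n → x (n + 1) =
      if Odd n then a (n + 1) * x n else a (n + 1) * x n - a (n + 1) + 1) :
    x r = leafValue R r + (∏ j ∈ Ioc i r, a j) * (x i - leafValue R i) +
      ∑ k ∈ Icc 1 (r - i), (∏ j ∈ Icc (i + k) r, a j) * (-1) ^ (i + k) := by
  have succ_eq (n : ℕ) (hin : i ≤ n) : x (n + 1) =
      a (n + 1) * (x n - leafValue R (n + 1)) + leafValue R (n + 1) := by
    rcases n.even_or_odd with hn | hn
    · simp [hrec n hin, leafValue, hn, Nat.even_add_one, mul_sub]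
    · simp [hrec n hin, leafValue, hn, hn.add_one]
  have deviation_succ (n : ℕ) (hin : i ≤ n) : x (n + 1) - leafValue R (n + 1) =
      a (n + 1) * ((x n - leafValue R n) + (-1) ^ (n + 1)) := by
    rw [succ_eq n hin, ← leafValue_sub_leafValue_succ]
    ring
  have deviation_eq : x r - leafValue R r = (∏ j ∈ Ioc i r, a j) * (x i - leafValue R i) +
      ∑ k ∈ Ioc i r, (∏ j ∈ Icc k r, a j) * (-1) ^ k :=
    eq_prod_mul_add_sum_of_affine_recurrence (y := fun n ↦ x n - leafValue R n)
      (b := fun n ↦ (-1) ^ n) deviation_succ hir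
  rw [add_assoc, ← sub_eq_iff_eq_add', deviation_eq,
    sum_Ioc_eq_sum_Icc_one_sub (fun k ↦ (∏ j ∈ Icc k r, a j) * (-1) ^ k)]

/-- For `r` even with `r > i ≥ 1`, the input value `x_r^i` retrieved by the inverse
Diagonalize recurrence (started from `0` at an even level `i`, resp. `1` at an odd
level `i`) satisfies `x r = ∑_{k=1}^{r-i} γ_{r,i+k} (-1)^k` if `i` is even, and
`x r = ∑_{k=1}^{r-i} γ_{r,i+k} (-1)^(k+1)` if `i` is odd. -/
theorem input_value_r_even (a : ℕ → ℤ) (i r : ℕ) (hi : 1 ≤ i) (hr : Even r) (hir : i < r)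
    (x : ℕ → ℤ) (hx : x i = if Even i then 0 else 1)
    (hrec : ∀ n : ℕ, i ≤ n → x (n + 1) =
      if Odd n then a (n + 1) * x n else a (n + 1) * x n - a (n + 1) + 1) :
    (Even i →
      x r = ∑ k ∈ Finset.Icc 1 (r - i), gam a r (i + k) * (-1) ^ k) ∧
    (Odd i →
      x r = ∑ k ∈ Finset.Icc 1 (r - i), gam a r (i + k) * (-1) ^ (k + 1)) := by
  rw [input_value_r_even_general a hir.le x hrec]
  constructor <;> intro h <;> simp [leafValue, gam, hr, hx, h.neg_one_pow, pow_add]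
end

section
/- Let r ≥ 1 and let a_1, …, a_r be integers with a_i ≥ 2 for all i. Then the graph G(a_1,…,a_r) is integral: for every real number μ such that ker(A − μI) ≠ {0}, where A is the real adjacency matrix of G(a_1,…,a_r), there exists an integer m with μ = m. Equivalently, every eigenvalue of the (real symmetric) adjacency matrix of G(a_1,…,a_r) is an integer. -/
/-- The cograph with balanced cotree `T_G(a_1,…,a_{r-1},0|0,…,0,a_r)`:
vertices are tuples `(v_1,…,v_r)` with `v_i ∈ {1,…,a_i}` (here indexed by `Fin r`,
coordinate `i : Fin r` corresponding to paper index `i+1`), two distinct tuples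
being adjacent iff the least 1-based index at which they differ is odd
(equivalently, the least 0-based index is even). -/
def balG (r : ℕ) (a : ℕ → ℕ) :
    SimpleGraph ((i : Fin r) → Fin (a ((i : ℕ) + 1))) :=
  SimpleGraph.fromRel (fun u v => ∃ i : Fin r,
    u i ≠ v i ∧ Even (i : ℕ) ∧ ∀ j : Fin r, (j : ℕ) < (i : ℕ) → u j = v j)

open scoped Classical in
/-- The real adjacency matrix of `balG r a`. -/
noncomputable def adjMat (r : ℕ) (a : ℕ → ℕ) :
    Matrix ((i : Fin r) → Fin (a ((i : ℕ) + 1))) ((i : Fin r) → Fin (a ((i : ℕ) + 1))) ℝ :=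
  Matrix.of fun u v => if (balG r a).Adj u v then 1 else 0

/-! Let `E s` be the 0/1 matrix recording whether two tuples agree on the coordinates in `s`. A
matrix whose entry at `(u, v)` is an integer depending only on the first coordinate where `u` and
`v` differ is an integer combination of the matrices `E s` with `s` an initial segment, and
`E s * E t` is an integer multiple of `E s` whenever `s ⊆ t`. Suppose `A x = μ x` for such a
combination `A` and some `x ≠ 0`, and let `s` be the smallest initial segment with `E s x ≠ 0`. Then
`E s (E t x)` is an integer multiple of `E s x` for every `t`: by the product rule if `s ⊆ t`, and
because `E t x = 0` otherwise. Hence `μ E s x = E s (A x)` is an integer multiple of `E s x` too. -/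

section IntegralEigenvalues

variable {R M κ : Type*} [CommRing R] [AddCommGroup M] [Module R M]

theorem exists_int_apply_eq_smul_of_mem_closure {E : κ → Module.End R M} {P : Module.End R M}
    {x : M} (hE : ∀ i, ∃ m : ℤ, P (E i x) = m • P x) {A : Module.End R M}
    (hA : A ∈ AddSubgroup.closure (Set.range E)) : ∃ m : ℤ, P (A x) = m • P x := by
  induction hA using AddSubgroup.closure_induction with
  | mem _ h =>
    obtain ⟨i, rfl⟩ := h
    exact hE i
  | zero => exact ⟨0, by simp⟩
  | add B C _ _ hB hC =>
    obtain ⟨b, hb⟩ := hB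
    obtain ⟨c, hc⟩ := hC
    exact ⟨b + c, by simp [hb, hc, add_smul]⟩
  | neg B _ hB =>
    obtain ⟨b, hb⟩ := hB
    exact ⟨-b, by simp [hb]⟩

theorem exists_int_eq_of_hasEigenvalue_of_mem_closure [IsDomain R] [Module.IsTorsionFree R M]
    [LinearOrder κ] [WellFoundedLT κ] {E : κ → Module.End R M}
    (hmul : ∀ i j, i ≤ j → ∃ m : ℤ, E i * E j = m • E i) {k : κ} (hk : E k = 1)
    {A : Module.End R M} (hA : A ∈ AddSubgroup.closure (Set.range E)) {μ : R}
    (hμ : A.HasEigenvalue μ) : ∃ m : ℤ, μ = m := by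
  obtain ⟨x, hx⟩ := hμ.exists_hasEigenvector
  obtain ⟨i, hi, hmin⟩ := exists_minimal_of_wellFoundedLT (fun i => E i x ≠ 0)
    ⟨k, by simpa [hk] using hx.2⟩
  have hE : ∀ j, ∃ m : ℤ, E i (E j x) = m • E i x := fun j => by
    rcases le_or_gt i j with hij | hji
    · obtain ⟨m, hm⟩ := hmul i j hij
      exact ⟨m, LinearMap.congr_fun hm x⟩
    · have hEj : E j x = 0 := by
        by_contra hj
        exact hji.not_ge (hmin hj hji.le)
      exact ⟨0, by simp [hEj]⟩
  obtain ⟨m, hm⟩ := exists_int_apply_eq_smul_of_mem_closure hE hA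
  refine ⟨m, smul_left_injective R hi ?_⟩
  simpa [hx.apply_eq_smul, Int.cast_smul_eq_zsmul] using hm

end IntegralEigenvalues

section IsFirstDiff

variable {ι : Type*} {α : ι → Type*}

/-- `i` is the least index at which the tuples `u` and `v` differ. -/
def IsFirstDiff [LT ι] (u v : ∀ i, α i) (i : ι) : Prop :=
  u i ≠ v i ∧ ∀ j < i, u j = v j

theorem IsFirstDiff.symm [LT ι] {u v : ∀ i, α i} {i : ι} (h : IsFirstDiff u v i) :
    IsFirstDiff v u i :=
  ⟨h.1.symm, fun j hj => (h.2 j hj).symm⟩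

theorem IsFirstDiff.unique [LinearOrder ι] {u v : ∀ i, α i} {i j : ι} (hi : IsFirstDiff u v i)
    (hj : IsFirstDiff u v j) : i = j :=
  le_antisymm (not_lt.1 fun h => hj.1 (hi.2 j h)) (not_lt.1 fun h => hi.1 (hj.2 i h))

theorem exists_isFirstDiff [LinearOrder ι] [WellFoundedLT ι] {u v : ∀ i, α i} (huv : u ≠ v) :
    ∃ i, IsFirstDiff u v i := by
  obtain ⟨i, hi, hmin⟩ :=
    exists_minimal_of_wellFoundedLT (fun i => u i ≠ v i) (Function.ne_iff.1 huv)
  exact ⟨i, hi, fun j hji => not_not.1 fun hj => hji.not_ge (hmin hj hji.le)⟩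

end IsFirstDiff

section AgreeMatrix

variable {ι : Type*} (α : ι → Type*) (R : Type*)

open scoped Classical in
/-- The 0/1 matrix of the relation "`u` and `v` agree on the coordinates in `s`" between tuples. -/
noncomputable def agreeMatrix [Zero R] [One R] (s : Set ι) :
    Matrix (∀ i, α i) (∀ i, α i) R :=
  Matrix.of fun u v => if ∀ i ∈ s, u i = v i then 1 else 0

variable {α R}

theorem agreeMatrix_apply [Zero R] [One R] (s : Set ι) (u v : ∀ i, α i)
    [Decidable (∀ i ∈ s, u i = v i)] :
    agreeMatrix α R s u v = if ∀ i ∈ s, u i = v i then 1 else 0 := by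
  rw [agreeMatrix, Matrix.of_apply]
  congr

theorem agreeMatrix_apply_self [Zero R] [One R] (s : Set ι) (u : ∀ i, α i) :
    agreeMatrix α R s u u = 1 := by
  classical
  simp [agreeMatrix_apply]

theorem agreeMatrix_univ [Zero R] [One R] [DecidableEq (∀ i, α i)] :
    agreeMatrix α R Set.univ = 1 := by
  classical
  ext u v
  simp [agreeMatrix_apply, Matrix.one_apply, funext_iff]

open scoped Classical in
theorem IsFirstDiff.agreeMatrix_lowerSet_apply [LinearOrder ι] [Zero R] [One R] {u v : ∀ i, α i}
    {i : ι} (h : IsFirstDiff u v i) (s : LowerSet ι) :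
    agreeMatrix α R s u v = if i ∈ s then 0 else 1 := by
  have hagree : (∀ j ∈ s, u j = v j) ↔ i ∉ s :=
    ⟨fun hs hi => h.1 (hs i hi), fun hi j hj =>
      h.2 j (lt_of_not_ge fun hij => hi (s.lower hij hj))⟩
  simp [agreeMatrix_apply, hagree]

theorem agreeMatrix_apply_mul_apply_of_subset [MulZeroOneClass R] {s t : Set ι} (hst : s ⊆ t)
    (u v w : ∀ i, α i) : agreeMatrix α R s u w * agreeMatrix α R t w v =
      agreeMatrix α R s u v * agreeMatrix α R t w v := by
  classical
  by_cases hw : ∀ i ∈ t, w i = v i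
  · have hs : (∀ i ∈ s, u i = w i) ↔ ∀ i ∈ s, u i = v i :=
      forall₂_congr fun i hi => by rw [hw i (hst hi)]
    simp only [agreeMatrix_apply, hs]
  · simp only [agreeMatrix_apply _ w v, if_neg hw, mul_zero]

variable [Fintype ι] [DecidableEq ι] [∀ i, Fintype (α i)]

open scoped Classical in
theorem sum_agreeMatrix_apply [NonAssocSemiring R] (s : Set ι) (v : ∀ i, α i) :
    ∑ w, agreeMatrix α R s w v = (∏ i with i ∉ s, Fintype.card (α i) : ℕ) := by
  have hpi : ({w : ∀ i, α i | ∀ i ∈ s, w i = v i} : Finset _) =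
      Fintype.piFinset fun i => if i ∈ s then {v i} else Finset.univ := by
    ext w
    simp only [Finset.mem_filter_univ, Fintype.mem_piFinset]
    refine forall_congr' fun i => ?_
    by_cases hi : i ∈ s <;> simp [hi]
  simp only [agreeMatrix_apply, Finset.sum_boole]
  rw [hpi, Fintype.card_piFinset, Finset.prod_filter]
  congr 1
  refine Finset.prod_congr rfl fun i _ => ?_
  by_cases hi : i ∈ s <;> simp [hi]

open scoped Classical in
theorem agreeMatrix_mul_agreeMatrix_of_subset [NonAssocSemiring R] {s t : Set ι} (hst : s ⊆ t) :
    agreeMatrix α R s * agreeMatrix α R t =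
      (∏ i with i ∉ t, Fintype.card (α i)) • agreeMatrix α R s := by
  ext u v
  simp only [Matrix.mul_apply, agreeMatrix_apply_mul_apply_of_subset hst, ← Finset.mul_sum,
    sum_agreeMatrix_apply, Matrix.smul_apply]
  rw [nsmul_eq_mul']

end AgreeMatrix

section LevelMatrix

variable {ι : Type*} {α : ι → Type*} [LinearOrder ι] [Fintype ι] {R : Type*}

theorem eq_add_sum_agreeMatrix [Ring R] [DecidableEq (∀ i, α i)]
    {A : Matrix (∀ i, α i) (∀ i, α i) R} {d : ℤ} {w : ι → ℤ} (hdiag : ∀ u, A u u = d)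
    (hA : ∀ u v i, IsFirstDiff u v i → A u v = w i) :
    A = d • 1 + ∑ i, w i •
      (agreeMatrix α R (LowerSet.Iio i : Set ι) - agreeMatrix α R (LowerSet.Iic i : Set ι)) := by
  classical
  ext u v
  rcases eq_or_ne u v with rfl | huv
  · simp only [Matrix.add_apply, Matrix.smul_apply, Matrix.one_apply_eq, Matrix.sum_apply,
      Matrix.sub_apply, agreeMatrix_apply_self, hdiag]
    simp
  · obtain ⟨i, hi⟩ := exists_isFirstDiff huv
    have hdiff : ∀ j, (if i < j then 0 else 1 : R) - (if i ≤ j then 0 else 1) =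
        if j = i then 1 else 0 := by grind
    simp only [Matrix.add_apply, Matrix.smul_apply, Matrix.one_apply_ne huv, Matrix.sum_apply,
      Matrix.sub_apply, hi.agreeMatrix_lowerSet_apply, LowerSet.mem_Iio_iff,
      LowerSet.mem_Iic_iff, hdiff, hA u v i hi]
    simp

theorem balanced_cograph_integral_general [CommRing R] [IsDomain R] [∀ i, Fintype (α i)]
    [DecidableEq (∀ i, α i)] {A : Matrix (∀ i, α i) (∀ i, α i) R} {d : ℤ} {w : ι → ℤ}
    (hdiag : ∀ u, A u u = d) (hA : ∀ u v i, IsFirstDiff u v i → A u v = w i) {μ : R}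
    (hμ : Module.End.HasEigenvalue (Matrix.toLin' A) μ) : ∃ m : ℤ, μ = m := by
  have : Finite (LowerSet ι) := Finite.of_injective _ SetLike.coe_injective
  let E : LowerSet ι → Module.End R ((∀ i, α i) → R) := fun s =>
    Matrix.toLin' (agreeMatrix α R (s : Set ι))
  have hmul : ∀ s t, s ≤ t → ∃ m : ℤ, E s * E t = m • E s := by
    classical
    intro s t hst
    refine ⟨(∏ i with i ∉ (t : Set ι), Fintype.card (α i) : ℕ), ?_⟩
    rw [natCast_zsmul, ← map_nsmul, ← agreeMatrix_mul_agreeMatrix_of_subset hst,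
      Matrix.toLin'_mul, Module.End.mul_eq_comp]
  have htop : E ⊤ = 1 := by
    simp only [E, LowerSet.coe_top, agreeMatrix_univ, Matrix.toLin'_one, Module.End.one_eq_id]
  have hE : ∀ s, E s ∈ AddSubgroup.closure (Set.range E) := fun s =>
    AddSubgroup.subset_closure (Set.mem_range_self s)
  refine exists_int_eq_of_hasEigenvalue_of_mem_closure hmul htop ?_ hμ
  rw [eq_add_sum_agreeMatrix hdiag hA, map_add, map_zsmul, map_sum, Matrix.toLin'_one,
    ← Module.End.one_eq_id, ← htop]
  refine add_mem (zsmul_mem (hE ⊤) d) (sum_mem fun i _ => ?_)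
  rw [map_zsmul, map_sub]
  exact zsmul_mem (sub_mem (hE _) (hE _)) (w i)

end LevelMatrix

theorem hasEigenvalue_toLin'_iff_ker_ne_bot {n R : Type*} [Fintype n] [DecidableEq n] [CommRing R]
    {A : Matrix n n R} {μ : R} :
    Module.End.HasEigenvalue (Matrix.toLin' A) μ ↔
      LinearMap.ker (Matrix.toLin' (A - μ • 1)) ≠ ⊥ := by
  rw [Module.End.hasEigenvalue_iff, Module.End.eigenspace_def, Module.End.one_eq_id,
    ← Matrix.toLin'_one, ← map_smul, ← map_sub]

section BalancedCograph

variable {r : ℕ} {a : ℕ → ℕ}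

theorem IsFirstDiff.balG_adj_iff_even {u v : (i : Fin r) → Fin (a ((i : ℕ) + 1))} {i : Fin r}
    (h : IsFirstDiff u v i) : (balG r a).Adj u v ↔ Even (i : ℕ) := by
  rw [balG, SimpleGraph.fromRel_adj]
  constructor
  · rintro ⟨-, ⟨k, hk, hkeven, hlt⟩ | ⟨k, hk, hkeven, hlt⟩⟩
    · exact h.unique ⟨hk, hlt⟩ ▸ hkeven
    · exact h.symm.unique ⟨hk, hlt⟩ ▸ hkeven
  · exact fun hi => ⟨fun huv => h.1 (congrFun huv i), Or.inl ⟨i, h.1, hi, h.2⟩⟩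

theorem adjMat_apply_self (u : (i : Fin r) → Fin (a ((i : ℕ) + 1))) : adjMat r a u u = 0 := by
  simp [adjMat]

theorem IsFirstDiff.adjMat_apply {u v : (i : Fin r) → Fin (a ((i : ℕ) + 1))} {i : Fin r}
    (h : IsFirstDiff u v i) : adjMat r a u v = if Even (i : ℕ) then 1 else 0 := by
  simp [adjMat, h.balG_adj_iff_even]

end BalancedCograph

/-- For `r ≥ 1` and `a_i ≥ 2`, the cograph with balanced cotree
`T_G(a_1,…,a_{r-1},0|0,…,0,a_r)` is integral: every real number `μ` with
`ker(A - μI) ≠ {0}`, where `A` is the real adjacency matrix, is an integer. -/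
theorem balanced_cograph_integral (r : ℕ) (hr1 : 1 ≤ r)
    (a : ℕ → ℕ) (ha : ∀ k, 2 ≤ a k) (μ : ℝ)
    (hμ : LinearMap.ker (Matrix.toLin' (adjMat r a - μ • 1)) ≠ ⊥) :
    ∃ m : ℤ, μ = (m : ℝ) := by
  exact balanced_cograph_integral_general (A := adjMat r a) (d := 0)
    (w := fun i => if Even (i : ℕ) then 1 else 0) (by simp [adjMat_apply_self])
    (fun _ _ _ h => by simp [h.adjMat_apply]) (hasEigenvalue_toLin'_iff_ker_ne_bot.2 hμ)
end
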